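/- arXiv:2102.06555 — 6 statements merged into one kernel-verified Lean document; each statement's English description precedes it below -/
import Mathlib

section
/- Let C̄_1, …, C̄_S be symmetric matrices in ℝ^{N×N}, let h ∈ Σ_N, let D_h = diag(h), and let M ∈ ℝ^{S×S} be defined by M_{pq} = ⟨D_h C̄_p, C̄_q D_h⟩_F. Then for any two embeddings w⁽¹⁾, w⁽²⁾ ∈ Σ_S, the squared Gromov–Wasserstein distance between the two embedded graphs with shared node weights h satisfies GW₂²(∑_{s=1}^S w⁽¹⁾_s C̄_s, ∑_{s=1}^S w⁽²⁾_s C̄_s, h, h) ≤ (w⁽¹⁾ − w⁽²⁾)ᵀ M (w⁽¹⁾ − w⁽²⁾). -/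
open Matrix BigOperators Finset

/-- The probability simplex in `ℝ^n`. -/
def probSimplex (n : ℕ) : Set (Fin n → ℝ) :=
  {h | (∀ i, 0 ≤ h i) ∧ ∑ i, h i = 1}

/-- The set of couplings between two histograms. -/
def couplings {n m : ℕ} (h1 : Fin n → ℝ) (h2 : Fin m → ℝ) :
    Set (Matrix (Fin n) (Fin m) ℝ) :=
  {T | (∀ i j, 0 ≤ T i j) ∧ (∀ i, ∑ j, T i j = h1 i) ∧ (∀ j, ∑ i, T i j = h2 j)}

/-- The Gromov–Wasserstein objective `E(C1, C2, T)`. -/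
def gwObj {n m : ℕ} (C1 : Matrix (Fin n) (Fin n) ℝ) (C2 : Matrix (Fin m) (Fin m) ℝ)
    (T : Matrix (Fin n) (Fin m) ℝ) : ℝ :=
  ∑ i, ∑ j, ∑ k, ∑ l, (C1 i j - C2 k l) ^ 2 * T i k * T j l

/-- The squared Gromov–Wasserstein distance (minimum of the objective over couplings). -/
noncomputable def GW2sq {n m : ℕ} (C1 : Matrix (Fin n) (Fin n) ℝ)
    (C2 : Matrix (Fin m) (Fin m) ℝ) (h1 : Fin n → ℝ) (h2 : Fin m → ℝ) : ℝ :=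
  sInf (gwObj C1 C2 '' couplings h1 h2)

/-- Frobenius inner product `⟨A, B⟩_F = tr(Aᵀ B)`. -/
def frob {n m : ℕ} (A B : Matrix (Fin n) (Fin m) ℝ) : ℝ :=
  Matrix.trace (Aᵀ * B)

/-- GW between two embedded graphs is bounded by the Mahalanobis distance between embeddings. -/
theorem gw_mahalanobis_bound {N S : ℕ}
    (Cbar : Fin S → Matrix (Fin N) (Fin N) ℝ) (hsym : ∀ s, (Cbar s).IsSymm)
    (h : Fin N → ℝ) (hh : h ∈ probSimplex N)
    (M : Matrix (Fin S) (Fin S) ℝ)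
    (hM : ∀ p q, M p q = frob (Matrix.diagonal h * Cbar p) (Cbar q * Matrix.diagonal h))
    (w1 w2 : Fin S → ℝ) (hw1 : w1 ∈ probSimplex S) (hw2 : w2 ∈ probSimplex S) :
    GW2sq (∑ s, w1 s • Cbar s) (∑ s, w2 s • Cbar s) h h
      ≤ ∑ p, ∑ q, (w1 p - w2 p) * M p q * (w1 q - w2 q) := by
  have hT : Matrix.diagonal h ∈ couplings h h := by
    refine ⟨fun i j => ?_, fun i => ?_, fun j => ?_⟩
    · rw [Matrix.diagonal_apply]
      split_ifs
      · exact hh.1 i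
      · exact le_rfl
    · simp [Matrix.diagonal_apply]
    · simp [Matrix.diagonal_apply]
  have hb : BddBelow (gwObj (∑ s, w1 s • Cbar s) (∑ s, w2 s • Cbar s) '' couplings h h) := by
    refine ⟨0, ?_⟩
    rintro _ ⟨T, hT, rfl⟩
    unfold gwObj
    refine Finset.sum_nonneg fun i _ => Finset.sum_nonneg fun j _ =>
      Finset.sum_nonneg fun k _ => Finset.sum_nonneg fun l _ => ?_
    exact mul_nonneg (mul_nonneg (sq_nonneg _) (hT.1 _ _)) (hT.1 _ _)
  refine (csInf_le hb ⟨_, hT, rfl⟩).trans (le_of_eq ?_)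
  have hM' : ∀ p q, M p q = ∑ i, ∑ j, h i * Cbar p i j * (Cbar q i j * h j) := by
    intro p q
    rw [hM, frob, Matrix.trace, Finset.sum_comm]
    refine Finset.sum_congr rfl fun j _ => ?_
    rw [Matrix.diag_apply, Matrix.mul_apply]
    refine Finset.sum_congr rfl fun i _ => ?_
    rw [Matrix.transpose_apply, Matrix.diagonal_mul, Matrix.mul_diagonal]
  have hL : gwObj (∑ s, w1 s • Cbar s) (∑ s, w2 s • Cbar s) (Matrix.diagonal h)
      = ∑ i, ∑ j, (∑ s, (w1 s - w2 s) * Cbar s i j) ^ 2 * h i * h j := by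
    unfold gwObj
    refine Finset.sum_congr rfl fun i _ => Finset.sum_congr rfl fun j _ => ?_
    simp [Matrix.diagonal_apply, Matrix.sum_apply, sub_mul, Finset.sum_sub_distrib]
  rw [hL]
  simp_rw [hM', sq, Finset.sum_mul_sum, Finset.mul_sum, Finset.sum_mul]
  have e : ∀ f : Fin N → Fin N → Fin S → Fin S → ℝ,
      ∑ i, ∑ j, ∑ p, ∑ q, f i j p q = ∑ p, ∑ q, ∑ i, ∑ j, f i j p q := by
    intro f
    calc _ = ∑ i, ∑ p, ∑ j, ∑ q, f i j p q :=
          Finset.sum_congr rfl fun i _ => Finset.sum_comm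
      _ = ∑ p, ∑ i, ∑ j, ∑ q, f i j p q := Finset.sum_comm
      _ = ∑ p, ∑ i, ∑ q, ∑ j, f i j p q :=
          Finset.sum_congr rfl fun p _ => Finset.sum_congr rfl fun i _ => Finset.sum_comm
      _ = _ := Finset.sum_congr rfl fun p _ => Finset.sum_comm
  rw [e]
  refine Finset.sum_congr rfl fun p _ => Finset.sum_congr rfl fun q _ =>
    Finset.sum_congr rfl fun i _ => Finset.sum_congr rfl fun j _ => ?_
  ring
end

section
/- Let h1 ∈ Σ_n, h2 ∈ Σ_m, C1 ∈ ℝ^{n×n}, C2 ∈ ℝ^{m×m}, and T ∈ U(h1,h2). Then the Gromov–Wasserstein objective admits the decomposition ∑_{i,j,k,l} (C1_{ij} − C2_{kl})² T_{ik} T_{jl} = ∑_{i,j} (C1_{ij})² (h1)_i (h1)_j + ∑_{k,l} (C2_{kl})² (h2)_k (h2)_l − 2⟨C1 T C2ᵀ, T⟩_F. -/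
open Matrix BigOperators Finset

/-- Decomposition of the Gromov–Wasserstein objective on the coupling polytope. -/
theorem gw_objective_decomposition {n m : ℕ}
    (h1 : Fin n → ℝ) (h2 : Fin m → ℝ)
    (hh1 : h1 ∈ probSimplex n) (hh2 : h2 ∈ probSimplex m)
    (C1 : Matrix (Fin n) (Fin n) ℝ) (C2 : Matrix (Fin m) (Fin m) ℝ)
    (T : Matrix (Fin n) (Fin m) ℝ) (hT : T ∈ couplings h1 h2) :
    gwObj C1 C2 T
      = ∑ i, ∑ j, (C1 i j) ^ 2 * h1 i * h1 j
        + ∑ k, ∑ l, (C2 k l) ^ 2 * h2 k * h2 l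
        - 2 * frob (C1 * T * C2ᵀ) T := by
  obtain ⟨-, hr, hc⟩ := hT
  have e1 : ∑ i, ∑ j, (C1 i j) ^ 2 * h1 i * h1 j
      = ∑ i, ∑ j, ∑ k, ∑ l, (C1 i j) ^ 2 * T i k * T j l := by
    refine Finset.sum_congr rfl fun i _ => Finset.sum_congr rfl fun j _ => ?_
    simp only [← Finset.mul_sum, ← Finset.sum_mul, hr]
  have e2 : ∑ k, ∑ l, (C2 k l) ^ 2 * h2 k * h2 l
      = ∑ i, ∑ j, ∑ k, ∑ l, (C2 k l) ^ 2 * T i k * T j l := by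
    have : ∀ k l, (C2 k l) ^ 2 * h2 k * h2 l
        = ∑ i, ∑ j, (C2 k l) ^ 2 * T i k * T j l := by
      intro k l
      simp only [← Finset.mul_sum, ← Finset.sum_mul, hc]
    simp only [this]
    calc _ = ∑ k, ∑ i, ∑ l, ∑ j, (C2 k l) ^ 2 * T i k * T j l :=
          Finset.sum_congr rfl fun k _ => Finset.sum_comm
      _ = ∑ i, ∑ k, ∑ l, ∑ j, (C2 k l) ^ 2 * T i k * T j l := Finset.sum_comm
      _ = ∑ i, ∑ k, ∑ j, ∑ l, (C2 k l) ^ 2 * T i k * T j l :=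
          Finset.sum_congr rfl fun i _ => Finset.sum_congr rfl fun k _ => Finset.sum_comm
      _ = _ := Finset.sum_congr rfl fun i _ => Finset.sum_comm
  have e3 : frob (C1 * T * C2ᵀ) T
      = ∑ i, ∑ j, ∑ k, ∑ l, C1 i j * C2 k l * T i k * T j l := by
    simp only [frob, Matrix.trace, Matrix.diag_apply, Matrix.mul_apply, Matrix.transpose_apply,
      Finset.sum_mul]
    calc _ = ∑ i, ∑ k, ∑ l, ∑ j, C1 i j * T j l * C2 k l * T i k := Finset.sum_comm
      _ = ∑ i, ∑ k, ∑ j, ∑ l, C1 i j * T j l * C2 k l * T i k :=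
          Finset.sum_congr rfl fun i _ => Finset.sum_congr rfl fun k _ => Finset.sum_comm
      _ = ∑ i, ∑ j, ∑ k, ∑ l, C1 i j * T j l * C2 k l * T i k :=
          Finset.sum_congr rfl fun i _ => Finset.sum_comm
      _ = _ := by
          refine Finset.sum_congr rfl fun i _ => Finset.sum_congr rfl fun j _ =>
            Finset.sum_congr rfl fun k _ => Finset.sum_congr rfl fun l _ => ?_
          ring
  rw [e1, e2, e3, gwObj]
  simp only [Finset.mul_sum, ← Finset.sum_add_distrib, ← Finset.sum_sub_distrib]
  refine Finset.sum_congr rfl fun i _ => Finset.sum_congr rfl fun j _ =>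
    Finset.sum_congr rfl fun k _ => Finset.sum_congr rfl fun l _ => ?_
  ring
end

section
/- Let C̄_1, …, C̄_S be symmetric matrices in ℝ^{N×N}, let h ∈ Σ_N, D_h = diag(h), and w⁽¹⁾, w⁽²⁾ ∈ Σ_S. Write C̃(w) = ∑_{s=1}^S w_s C̄_s. Then for every coupling T ∈ U(h,h), the Gromov–Wasserstein objective between the two linear models equals E(C̃(w⁽¹⁾), C̃(w⁽²⁾), T) = ∑_{p,q} (w⁽¹⁾_p w⁽¹⁾_q + w⁽²⁾_p w⁽²⁾_q) ⟨D_h C̄_p, C̄_q D_h⟩_F − 2 ∑_{p,q} w⁽¹⁾_p w⁽²⁾_q ⟨Tᵀ C̄_p, C̄_q Tᵀ⟩_F. -/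
open Matrix BigOperators Finset

theorem frob_bilin {N S : ℕ} (C : Fin S → Matrix (Fin N) (Fin N) ℝ) (u v : Fin S → ℝ)
    (A B : Matrix (Fin N) (Fin N) ℝ) :
    frob (A * ∑ s, u s • C s) ((∑ s, v s • C s) * B)
      = ∑ p, ∑ q, u p * v q * frob (A * C p) (C q * B) := by
  unfold frob
  simp only [Matrix.mul_sum, Matrix.sum_mul, Matrix.transpose_sum, Matrix.trace_sum,
    Matrix.mul_smul, Matrix.smul_mul, Matrix.transpose_smul, Matrix.trace_smul, smul_eq_mul]
  simp only [Finset.mul_sum]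
  rw [Finset.sum_comm]
  refine Finset.sum_congr rfl fun p _ => Finset.sum_congr rfl fun q _ => ?_
  ring

theorem frob_diag {N : ℕ} (C : Matrix (Fin N) (Fin N) ℝ) (h : Fin N → ℝ) :
    frob (Matrix.diagonal h * C) (C * Matrix.diagonal h)
      = ∑ i, ∑ j, C i j ^ 2 * h i * h j := by
  unfold frob
  simp only [Matrix.trace, Matrix.diag, Matrix.mul_apply (M := (_ : Matrix _ _ ℝ)ᵀ),
    Matrix.transpose_apply, Matrix.diagonal_mul, Matrix.mul_diagonal]
  rw [Finset.sum_comm]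
  refine Finset.sum_congr rfl fun p _ => Finset.sum_congr rfl fun q _ => ?_
  ring

theorem frob_cross {N : ℕ} (C D T : Matrix (Fin N) (Fin N) ℝ) :
    frob (Tᵀ * C) (D * Tᵀ)
      = ∑ i, ∑ j, ∑ k, ∑ l, C i j * D k l * T i k * T j l := by
  unfold frob
  simp only [Matrix.trace, Matrix.diag, Matrix.mul_apply, Matrix.transpose_apply,
    Finset.sum_mul_sum]
  have : ∀ j : Fin N, (∑ k, ∑ i, ∑ l, T i k * C i j * (D k l * T j l))
      = ∑ i, ∑ k, ∑ l, T i k * C i j * (D k l * T j l) := fun j => Finset.sum_comm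
  simp only [this]
  rw [Finset.sum_comm]
  refine Finset.sum_congr rfl fun i _ => Finset.sum_congr rfl fun j _ =>
    Finset.sum_congr rfl fun k _ => Finset.sum_congr rfl fun l _ => ?_
  ring

theorem gwObj_expand {N : ℕ} (C D T : Matrix (Fin N) (Fin N) ℝ) (h : Fin N → ℝ)
    (hT : T ∈ couplings h h) :
    gwObj C D T = frob (Matrix.diagonal h * C) (C * Matrix.diagonal h)
      + frob (Matrix.diagonal h * D) (D * Matrix.diagonal h)
      - 2 * frob (Tᵀ * C) (D * Tᵀ) := by
  obtain ⟨_, hr, hc⟩ := hT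
  have e1 : ∑ i, ∑ j, ∑ k, ∑ l, C i j ^ 2 * T i k * T j l
      = ∑ i, ∑ j, C i j ^ 2 * h i * h j := by
    refine Finset.sum_congr rfl fun i _ => Finset.sum_congr rfl fun j _ => ?_
    simp only [← Finset.mul_sum, ← Finset.sum_mul, hr]
  have e2 : ∑ i, ∑ j, ∑ k, ∑ l, D k l ^ 2 * T i k * T j l
      = ∑ k, ∑ l, D k l ^ 2 * h k * h l := by
    have a : ∀ i, ∑ j, ∑ k, ∑ l, D k l ^ 2 * T i k * T j l
        = ∑ k, ∑ l, D k l ^ 2 * T i k * h l := fun i => by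
      rw [Finset.sum_comm]
      refine Finset.sum_congr rfl fun k _ => ?_
      rw [Finset.sum_comm]
      simp only [← Finset.mul_sum, hc]
    simp only [a]
    rw [Finset.sum_comm]
    refine Finset.sum_congr rfl fun k _ => ?_
    rw [Finset.sum_comm]
    simp only [← Finset.mul_sum, ← Finset.sum_mul, hc]
  rw [frob_diag, frob_diag, frob_cross, ← e1, ← e2]
  unfold gwObj
  simp only [Finset.mul_sum, ← Finset.sum_add_distrib, ← Finset.sum_sub_distrib]
  refine Finset.sum_congr rfl fun i _ => Finset.sum_congr rfl fun j _ =>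
    Finset.sum_congr rfl fun k _ => Finset.sum_congr rfl fun l _ => ?_
  ring

/-- Expansion of the GW objective between two linear models at any coupling. -/
theorem gw_objective_linear_models {N S : ℕ}
    (Cbar : Fin S → Matrix (Fin N) (Fin N) ℝ) (hsym : ∀ s, (Cbar s).IsSymm)
    (h : Fin N → ℝ) (hh : h ∈ probSimplex N)
    (w1 w2 : Fin S → ℝ) (hw1 : w1 ∈ probSimplex S) (hw2 : w2 ∈ probSimplex S)
    (T : Matrix (Fin N) (Fin N) ℝ) (hT : T ∈ couplings h h) :
    gwObj (∑ s, w1 s • Cbar s) (∑ s, w2 s • Cbar s) T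
      = ∑ p, ∑ q, (w1 p * w1 q + w2 p * w2 q) *
          frob (Matrix.diagonal h * Cbar p) (Cbar q * Matrix.diagonal h)
        - 2 * ∑ p, ∑ q, w1 p * w2 q * frob (Tᵀ * Cbar p) (Cbar q * Tᵀ) := by
  rw [gwObj_expand _ _ _ h hT, frob_bilin, frob_bilin, frob_bilin]
  simp only [add_mul, Finset.sum_add_distrib]
end

section
/- Let C̄_1, …, C̄_S be symmetric matrices in ℝ^{N×N}, let h ∈ Σ_N, D_h = diag(h), M ∈ ℝ^{S×S} with M_{pq} = ⟨D_h C̄_p, C̄_q D_h⟩_F, and w⁽¹⁾, w⁽²⁾ ∈ Σ_S. Write C̃(w) = ∑_{s=1}^S w_s C̄_s. Then the diagonal matrix D_h belongs to U(h,h), and evaluating the Gromov–Wasserstein objective at the coupling T = D_h gives exactly the squared Mahalanobis distance between embeddings: E(C̃(w⁽¹⁾), C̃(w⁽²⁾), D_h) = (w⁽¹⁾ − w⁽²⁾)ᵀ M (w⁽¹⁾ − w⁽²⁾). -/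
open Matrix BigOperators Finset

/-- The diagonal coupling D_h is admissible, and the GW objective at D_h equals the
squared Mahalanobis distance between the embeddings. -/
theorem gw_objective_at_diagonal_coupling {N S : ℕ}
    (Cbar : Fin S → Matrix (Fin N) (Fin N) ℝ) (hsym : ∀ s, (Cbar s).IsSymm)
    (h : Fin N → ℝ) (hh : h ∈ probSimplex N)
    (M : Matrix (Fin S) (Fin S) ℝ)
    (hM : ∀ p q, M p q = frob (Matrix.diagonal h * Cbar p) (Cbar q * Matrix.diagonal h))
    (w1 w2 : Fin S → ℝ) (hw1 : w1 ∈ probSimplex S) (hw2 : w2 ∈ probSimplex S) :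
    Matrix.diagonal h ∈ couplings h h ∧
    gwObj (∑ s, w1 s • Cbar s) (∑ s, w2 s • Cbar s) (Matrix.diagonal h)
      = ∑ p, ∑ q, (w1 p - w2 p) * M p q * (w1 q - w2 q) := by
  have hM' : ∀ p q, M p q = ∑ i, ∑ j, h i * h j * (Cbar p i j * Cbar q i j) := by
    intro p q
    rw [hM, frob, Matrix.trace, Finset.sum_comm]
    refine Finset.sum_congr rfl fun j _ => ?_
    rw [Matrix.diag_apply, Matrix.mul_apply]
    refine Finset.sum_congr rfl fun i _ => ?_
    rw [Matrix.transpose_apply, Matrix.diagonal_mul, Matrix.mul_diagonal]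
    ring
  refine ⟨⟨fun i j => ?_, fun i => ?_, fun j => ?_⟩, ?_⟩
  · rw [Matrix.diagonal_apply]
    split_ifs
    · exact hh.1 i
    · exact le_rfl
  · simp [Matrix.diagonal_apply]
  · simp [Matrix.diagonal_apply]
  · have hL : gwObj (∑ s, w1 s • Cbar s) (∑ s, w2 s • Cbar s) (Matrix.diagonal h)
        = ∑ i, ∑ j, h i * h j * (∑ s, (w1 s - w2 s) * Cbar s i j) ^ 2 := by
      unfold gwObj
      refine Finset.sum_congr rfl fun i _ => Finset.sum_congr rfl fun j _ => ?_
      rw [Finset.sum_eq_single i, Finset.sum_eq_single j]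
      · simp only [Matrix.diagonal_apply_eq, Matrix.sum_apply, Matrix.smul_apply, smul_eq_mul,
          sub_mul, Finset.sum_sub_distrib]
        ring
      · intro l _ hl
        rw [Matrix.diagonal_apply_ne' h hl, mul_zero]
      · simp
      · intro k _ hk
        refine Finset.sum_eq_zero fun l _ => ?_
        rw [Matrix.diagonal_apply_ne' h hk, mul_zero, zero_mul]
      · simp
    have hR : ∑ p, ∑ q, (w1 p - w2 p) * M p q * (w1 q - w2 q)
        = ∑ p, ∑ q, ∑ i, ∑ j, h i * h j *
            (((w1 p - w2 p) * Cbar p i j) * ((w1 q - w2 q) * Cbar q i j)) := by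
      refine Finset.sum_congr rfl fun p _ => Finset.sum_congr rfl fun q _ => ?_
      simp only [hM', Finset.mul_sum, Finset.sum_mul]
      refine Finset.sum_congr rfl fun i _ => Finset.sum_congr rfl fun j _ => ?_
      ring
    rw [hL, hR]
    simp only [sq, Finset.sum_mul_sum]
    simp only [Finset.mul_sum]
    have e1 : ∀ f : Fin N → Fin N → Fin S → Fin S → ℝ,
        ∑ i, ∑ j, ∑ p, ∑ q, f i j p q = ∑ p, ∑ q, ∑ i, ∑ j, f i j p q := by
      intro f
      calc ∑ i, ∑ j, ∑ p, ∑ q, f i j p q = ∑ i, ∑ p, ∑ j, ∑ q, f i j p q :=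
            Finset.sum_congr rfl fun i _ => Finset.sum_comm
        _ = ∑ p, ∑ i, ∑ j, ∑ q, f i j p q := Finset.sum_comm
        _ = ∑ p, ∑ i, ∑ q, ∑ j, f i j p q :=
            Finset.sum_congr rfl fun p _ => Finset.sum_congr rfl fun i _ => Finset.sum_comm
        _ = ∑ p, ∑ q, ∑ i, ∑ j, f i j p q :=
            Finset.sum_congr rfl fun p _ => Finset.sum_comm
    exact e1 fun i j p q => h i * h j *
      (((w1 p - w2 p) * Cbar p i j) * ((w1 q - w2 q) * Cbar q i j))
end

section
/- Let C̄_1, …, C̄_S be symmetric matrices in ℝ^{N×N} and Ā_1, …, Ā_S ∈ ℝ^{N×d} be feature matrices, let h ∈ Σ_N, D_h = diag(h), and α ∈ (0,1). Define M₁ ∈ ℝ^{S×S} by (M₁)_{pq} = ⟨D_h C̄_p, C̄_q D_h⟩_F and M₂ ∈ ℝ^{S×S} by (M₂)_{pq} = ⟨D_h^{1/2} Ā_p, D_h^{1/2} Ā_q⟩_F, and set M_α = α M₁ + (1−α) M₂. Then M_α is positive semi-definite, and for any two embeddings w⁽¹⁾, w⁽²⁾ ∈ Σ_S one has FGW²_{2,α}(C̃(w⁽¹⁾),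 Ã(w⁽¹⁾), C̃(w⁽²⁾), Ã(w⁽²⁾), h, h) ≤ (w⁽¹⁾ − w⁽²⁾)ᵀ M_α (w⁽¹⁾ − w⁽²⁾), where C̃(w) = ∑_s w_s C̄_s and Ã(w) = ∑_s w_s Ā_s. -/
open Matrix BigOperators Finset

/-- The Wasserstein objective with squared Euclidean ground cost. -/
def wassObj {n m d : ℕ} (A1 : Matrix (Fin n) (Fin d) ℝ) (A2 : Matrix (Fin m) (Fin d) ℝ)
    (T : Matrix (Fin n) (Fin m) ℝ) : ℝ :=
  ∑ i, ∑ j, (∑ t, (A1 i t - A2 j t) ^ 2) * T i j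

/-- Squared Fused Gromov–Wasserstein distance. -/
noncomputable def FGW2sq {n m d : ℕ} (α : ℝ)
    (C1 : Matrix (Fin n) (Fin n) ℝ) (A1 : Matrix (Fin n) (Fin d) ℝ)
    (C2 : Matrix (Fin m) (Fin m) ℝ) (A2 : Matrix (Fin m) (Fin d) ℝ)
    (h1 : Fin n → ℝ) (h2 : Fin m → ℝ) : ℝ :=
  sInf ((fun T => (1 - α) * wassObj A1 A2 T + α * gwObj C1 C2 T) '' couplings h1 h2)

theorem fgw_key {N S d : ℕ}
    (Cbar : Fin S → Matrix (Fin N) (Fin N) ℝ)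
    (Abar : Fin S → Matrix (Fin N) (Fin d) ℝ)
    (h : Fin N → ℝ) (hh : ∀ i, 0 ≤ h i) (α : ℝ)
    (M1 M2 : Matrix (Fin S) (Fin S) ℝ)
    (hM1 : ∀ p q, M1 p q = frob (Matrix.diagonal h * Cbar p) (Cbar q * Matrix.diagonal h))
    (hM2 : ∀ p q, M2 p q
      = frob (Matrix.diagonal (fun i => Real.sqrt (h i)) * Abar p)
             (Matrix.diagonal (fun i => Real.sqrt (h i)) * Abar q))
    (x : Fin S → ℝ) :
    ∑ p, ∑ q, x p * (α * M1 p q + (1 - α) * M2 p q) * x q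
      = (1 - α) * (∑ i, (∑ t, (∑ p, x p * Abar p i t) ^ 2) * h i)
        + α * (∑ i, ∑ j, (∑ p, x p * Cbar p i j) ^ 2 * h i * h j) := by
  have e1 : ∀ p q, M1 p q = ∑ i, ∑ j, Cbar p i j * Cbar q i j * h i * h j := by
    intro p q
    rw [hM1, frob, Matrix.trace, Finset.sum_comm]
    refine Finset.sum_congr rfl fun j _ => ?_
    simp only [Matrix.diag_apply, Matrix.mul_apply (M := _ᵀ), Matrix.transpose_apply,
      Matrix.diagonal_mul, Matrix.mul_diagonal]
    refine Finset.sum_congr rfl fun i _ => ?_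
    ring
  have e2 : ∀ p q, M2 p q = ∑ i, ∑ t, Abar p i t * Abar q i t * h i := by
    intro p q
    rw [hM2, frob, Matrix.trace, Finset.sum_comm]
    refine Finset.sum_congr rfl fun j _ => ?_
    simp only [Matrix.diag_apply, Matrix.mul_apply (M := _ᵀ), Matrix.transpose_apply,
      Matrix.diagonal_mul, Matrix.mul_diagonal]
    refine Finset.sum_congr rfl fun i _ => ?_
    have := Real.mul_self_sqrt (hh i)
    linear_combination (Abar p i j * Abar q i j) * this
  have f1 : ∑ p, ∑ q, x p * M1 p q * x q
      = ∑ i, ∑ j, (∑ p, x p * Cbar p i j) ^ 2 * h i * h j := by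
    simp only [e1, sq, Finset.sum_mul_sum, Finset.mul_sum, Finset.sum_mul]
    simp only [Finset.sum_comm (s := (Finset.univ : Finset (Fin S))) (t := (Finset.univ : Finset (Fin N)))]
    refine Finset.sum_congr rfl fun i _ => Finset.sum_congr rfl fun j _ =>
      Finset.sum_congr rfl fun p _ => Finset.sum_congr rfl fun q _ => ?_
    ring
  have f2 : ∑ p, ∑ q, x p * M2 p q * x q
      = ∑ i, (∑ t, (∑ p, x p * Abar p i t) ^ 2) * h i := by
    simp only [e2, sq, Finset.sum_mul_sum, Finset.mul_sum, Finset.sum_mul]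
    simp only [Finset.sum_comm (s := (Finset.univ : Finset (Fin S))) (t := (Finset.univ : Finset (Fin N))),
      Finset.sum_comm (s := (Finset.univ : Finset (Fin S))) (t := (Finset.univ : Finset (Fin d)))]
    refine Finset.sum_congr rfl fun i _ => Finset.sum_congr rfl fun j _ =>
      Finset.sum_congr rfl fun p _ => Finset.sum_congr rfl fun q _ => ?_
    ring
  rw [← f1, ← f2]
  simp only [Finset.mul_sum, ← Finset.sum_add_distrib]
  refine Finset.sum_congr rfl fun p _ => Finset.sum_congr rfl fun q _ => ?_
  ring

/-- FGW between two embedded labeled graphs is bounded by the Mahalanobis distance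
induced by M_α = α M₁ + (1−α) M₂, which is positive semi-definite. -/
theorem fgw_mahalanobis_bound {N S d : ℕ}
    (Cbar : Fin S → Matrix (Fin N) (Fin N) ℝ) (hsym : ∀ s, (Cbar s).IsSymm)
    (Abar : Fin S → Matrix (Fin N) (Fin d) ℝ)
    (h : Fin N → ℝ) (hh : h ∈ probSimplex N)
    (α : ℝ) (hα : α ∈ Set.Ioo (0 : ℝ) 1)
    (M1 M2 : Matrix (Fin S) (Fin S) ℝ)
    (hM1 : ∀ p q, M1 p q = frob (Matrix.diagonal h * Cbar p) (Cbar q * Matrix.diagonal h))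
    (hM2 : ∀ p q, M2 p q
      = frob (Matrix.diagonal (fun i => Real.sqrt (h i)) * Abar p)
             (Matrix.diagonal (fun i => Real.sqrt (h i)) * Abar q))
    (w1 w2 : Fin S → ℝ) (hw1 : w1 ∈ probSimplex S) (hw2 : w2 ∈ probSimplex S) :
    (∀ x : Fin S → ℝ, 0 ≤ ∑ p, ∑ q, x p * (α * M1 p q + (1 - α) * M2 p q) * x q) ∧
    FGW2sq α (∑ s, w1 s • Cbar s) (∑ s, w1 s • Abar s)
             (∑ s, w2 s • Cbar s) (∑ s, w2 s • Abar s) h h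
      ≤ ∑ p, ∑ q, (w1 p - w2 p) * (α * M1 p q + (1 - α) * M2 p q) * (w1 q - w2 q) := by
  obtain ⟨h0, -⟩ := hh
  obtain ⟨ha0, ha1⟩ := hα
  have ha1' : 0 ≤ 1 - α := by linarith
  refine ⟨fun x => ?_, ?_⟩
  · rw [fgw_key Cbar Abar h h0 α M1 M2 hM1 hM2]
    have u1 : 0 ≤ ∑ i, (∑ t, (∑ p, x p * Abar p i t) ^ 2) * h i :=
      Finset.sum_nonneg fun i _ =>
        mul_nonneg (Finset.sum_nonneg fun t _ => sq_nonneg _) (h0 i)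
    have u2 : 0 ≤ ∑ i, ∑ j, (∑ p, x p * Cbar p i j) ^ 2 * h i * h j :=
      Finset.sum_nonneg fun i _ => Finset.sum_nonneg fun j _ =>
        mul_nonneg (mul_nonneg (sq_nonneg _) (h0 i)) (h0 j)
    exact add_nonneg (mul_nonneg ha1' u1) (mul_nonneg ha0.le u2)
  · rw [fgw_key Cbar Abar h h0 α M1 M2 hM1 hM2 (fun p => w1 p - w2 p)]
    unfold FGW2sq
    apply csInf_le
    · refine ⟨0, ?_⟩
      rintro _ ⟨T, ⟨hT, -, -⟩, rfl⟩
      refine add_nonneg (mul_nonneg ha1' ?_) (mul_nonneg ha0.le ?_)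
      · exact Finset.sum_nonneg fun i _ => Finset.sum_nonneg fun j _ =>
          mul_nonneg (Finset.sum_nonneg fun t _ => sq_nonneg _) (hT i j)
      · exact Finset.sum_nonneg fun i _ => Finset.sum_nonneg fun j _ =>
          Finset.sum_nonneg fun k _ => Finset.sum_nonneg fun l _ =>
          mul_nonneg (mul_nonneg (sq_nonneg _) (hT i k)) (hT j l)
    · refine ⟨Matrix.diagonal h, ⟨?_, ?_, ?_⟩, ?_⟩
      · intro i j
        rw [Matrix.diagonal_apply]
        split_ifs
        exacts [h0 i, le_rfl]
      · intro i
        simp [Matrix.diagonal_apply]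
      · intro i
        simp [Matrix.diagonal_apply]
      · simp [wassObj, gwObj, Matrix.diagonal_apply, Matrix.sum_apply, sub_mul,
          Finset.sum_sub_distrib]
end

section
/- Let C1 ∈ ℝ^{n×n} and C2 ∈ ℝ^{m×m} be symmetric, h1 ∈ Σ_n, h2 ∈ Σ_m, and let T* ∈ U(h1,h2) satisfy E(C1,C2,T*) ≤ E(C1,C2,T) for all T ∈ U(h1,h2) (i.e., T* is an optimal Gromov–Wasserstein coupling). Define the cost matrix M(T*) ∈ ℝ^{n×m} by M(T*)_{ij} = ∑_{k,l} (C1_{ik} − C2_{jl})² T*_{kl}. Then T* is also optimal for the linearized problem: for every T ∈ U(h1,h2), ⟨M(T*), T*⟩_F ≤ ⟨M(T*), T⟩_F. -/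
open Matrix BigOperators Finset

def gwB {n m : ℕ} (C1 : Matrix (Fin n) (Fin n) ℝ) (C2 : Matrix (Fin m) (Fin m) ℝ)
    (S T : Matrix (Fin n) (Fin m) ℝ) : ℝ :=
  ∑ i, ∑ j, ∑ k, ∑ l, (C1 i j - C2 k l) ^ 2 * S i k * T j l

theorem gwB_symm {n m : ℕ} (C1 : Matrix (Fin n) (Fin n) ℝ) (hC1 : C1.IsSymm)
    (C2 : Matrix (Fin m) (Fin m) ℝ) (hC2 : C2.IsSymm)
    (S T : Matrix (Fin n) (Fin m) ℝ) : gwB C1 C2 S T = gwB C1 C2 T S := by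
  unfold gwB
  rw [Finset.sum_comm]
  refine Finset.sum_congr rfl fun i _ => Finset.sum_congr rfl fun j _ => ?_
  rw [Finset.sum_comm]
  refine Finset.sum_congr rfl fun k _ => Finset.sum_congr rfl fun l _ => ?_
  rw [hC1.apply i j, hC2.apply k l]
  ring

theorem gwObj_comb {n m : ℕ} (C1 : Matrix (Fin n) (Fin n) ℝ)
    (C2 : Matrix (Fin m) (Fin m) ℝ)
    (S T : Matrix (Fin n) (Fin m) ℝ) (s t : ℝ) :
    gwObj C1 C2 (fun i j => s * S i j + t * T i j) =
      s * s * gwB C1 C2 S S + s * t * gwB C1 C2 S T + t * s * gwB C1 C2 T S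
        + t * t * gwB C1 C2 T T := by
  unfold gwObj gwB
  simp only [Finset.mul_sum, ← Finset.sum_add_distrib]
  refine Finset.sum_congr rfl fun i _ => Finset.sum_congr rfl fun j _ =>
    Finset.sum_congr rfl fun k _ => Finset.sum_congr rfl fun l _ => ?_
  ring

theorem frob_eq_gwB {n m : ℕ} (C1 : Matrix (Fin n) (Fin n) ℝ)
    (C2 : Matrix (Fin m) (Fin m) ℝ) (Tstar M T : Matrix (Fin n) (Fin m) ℝ)
    (hM : ∀ i j, M i j = ∑ k, ∑ l, (C1 i k - C2 j l) ^ 2 * Tstar k l) :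
    frob M T = gwB C1 C2 T Tstar := by
  unfold frob gwB
  simp only [Matrix.trace, Matrix.diag, Matrix.mul_apply, Matrix.transpose_apply, hM,
    Finset.sum_mul]
  rw [Finset.sum_comm]
  refine Finset.sum_congr rfl fun i _ => ?_
  rw [Finset.sum_comm]
  refine Finset.sum_congr rfl fun j _ => Finset.sum_congr rfl fun k _ =>
    Finset.sum_congr rfl fun l _ => ?_
  ring

/-- An optimal GW coupling is also optimal for the linearized problem with cost M(T*). -/
theorem gw_optimal_is_linearized_optimal {n m : ℕ}
    (C1 : Matrix (Fin n) (Fin n) ℝ) (hC1 : C1.IsSymm)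
    (C2 : Matrix (Fin m) (Fin m) ℝ) (hC2 : C2.IsSymm)
    (h1 : Fin n → ℝ) (h2 : Fin m → ℝ)
    (hh1 : h1 ∈ probSimplex n) (hh2 : h2 ∈ probSimplex m)
    (Tstar : Matrix (Fin n) (Fin m) ℝ) (hTstar : Tstar ∈ couplings h1 h2)
    (hopt : ∀ T ∈ couplings h1 h2, gwObj C1 C2 Tstar ≤ gwObj C1 C2 T)
    (M : Matrix (Fin n) (Fin m) ℝ)
    (hM : ∀ i j, M i j = ∑ k, ∑ l, (C1 i k - C2 j l) ^ 2 * Tstar k l) :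
    ∀ T ∈ couplings h1 h2, frob M Tstar ≤ frob M T := by
  intro T hT
  rw [frob_eq_gwB C1 C2 Tstar M T hM, frob_eq_gwB C1 C2 Tstar M Tstar hM]
  have key : ∀ t : ℝ, 0 ≤ t → t ≤ 1 → gwB C1 C2 Tstar Tstar ≤
      (1 - t) * (1 - t) * gwB C1 C2 Tstar Tstar + 2 * (1 - t) * t * gwB C1 C2 T Tstar
        + t * t * gwB C1 C2 T T := by
    intro t ht0 ht1
    have h := hopt (fun i j => (1 - t) * Tstar i j + t * T i j) (by
      obtain ⟨a1, a2, a3⟩ := hTstar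
      obtain ⟨b1, b2, b3⟩ := hT
      refine ⟨fun i j => ?_, fun i => ?_, fun j => ?_⟩
      · exact add_nonneg (mul_nonneg (by linarith) (a1 i j)) (mul_nonneg ht0 (b1 i j))
      · rw [Finset.sum_add_distrib, ← Finset.mul_sum, ← Finset.mul_sum, a2, b2]; ring
      · rw [Finset.sum_add_distrib, ← Finset.mul_sum, ← Finset.mul_sum, a3, b3]; ring)
    rw [gwObj_comb, gwB_symm C1 hC1 C2 hC2 Tstar T] at h
    have h' : gwObj C1 C2 Tstar = gwB C1 C2 Tstar Tstar := rfl
    linarith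
  generalize gwB C1 C2 Tstar Tstar = a at *
  generalize gwB C1 C2 T Tstar = b at *
  generalize gwB C1 C2 T T = c at *
  by_contra! hlt
  have hd : 0 < a - b := by linarith
  have hq := abs_nonneg (a - 2 * b + c)
  have hq' := le_abs_self (a - 2 * b + c)
  generalize |a - 2 * b + c| = q at *
  have hs : 0 < a - b + q := by linarith
  obtain ⟨t, ht⟩ : ∃ t, t = (a - b) / (a - b + q) := ⟨_, rfl⟩
  have ht0 : 0 < t := by rw [ht]; positivity
  have ht1 : t ≤ 1 := by rw [ht, div_le_one hs]; linarith
  have hts : t * (a - b + q) = a - b := by rw [ht]; field_simp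
  have k := key t ht0.le ht1
  have k2 : 0 ≤ t * (t * (a - 2 * b + c) - 2 * (a - b)) := by linarith
  have k3 : 0 ≤ t * (a - 2 * b + c) - 2 * (a - b) := nonneg_of_mul_nonneg_right k2 ht0
  have k4 : t * (a - 2 * b + c) ≤ t * q := mul_le_mul_of_nonneg_left hq' ht0.le
  have k5 : 0 < t * (a - b) := mul_pos ht0 hd
  linarith
end
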